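/- Let T₁ and T₂ be trees. Then q(T₁ ∨ T₂) = 2 if and only if | |T₁| − |T₂| | ≤ 2. -/

import Mathlib

open Matrix Filter

/-- `A ∈ S(G)`: real symmetric matrix whose off-diagonal zero pattern is given by `G`. -/
def inS {V : Type*} (G : SimpleGraph V) (A : Matrix V V ℝ) : Prop :=
  A.IsSymm ∧ ∀ i j : V, i ≠ j → (A i j ≠ 0 ↔ G.Adj i j)

/-- The spectrum of a matrix, as the multiset of roots of its characteristic polynomial. -/
noncomputable def specMultiset {V : Type*} [Fintype V] [DecidableEq V]
    (A : Matrix V V ℝ) : Multiset ℝ :=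
  A.charpoly.roots

/-- The number of distinct eigenvalues of a matrix. -/
noncomputable def qMat {V : Type*} [Fintype V] [DecidableEq V] (A : Matrix V V ℝ) : ℕ :=
  (specMultiset A).toFinset.card

/-- `q(G)`: the minimum number of distinct eigenvalues over matrices in `S(G)`. -/
noncomputable def qGraph {V : Type*} [Fintype V] [DecidableEq V] (G : SimpleGraph V) : ℕ :=
  sInf {q | ∃ A : Matrix V V ℝ, inS G A ∧ qMat A = q}

/-- The strong spectral property. -/
def HasSSP {V : Type*} [Fintype V] [DecidableEq V] (A : Matrix V V ℝ) : Prop :=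
  ∀ X : Matrix V V ℝ, X.IsSymm → A * X = X * A →
    Matrix.hadamard A X = 0 → Matrix.hadamard (1 : Matrix V V ℝ) X = 0 → X = 0

/-- Generic realisability of a multiset of eigenvalues for a graph. -/
def GenericallyRealisable {V : Type*} [Fintype V] [DecidableEq V]
    (G : SimpleGraph V) (σ : Multiset ℝ) : Prop :=
  ∀ Y : Finset (V → ℝ), (∀ y ∈ Y, y ≠ 0) →
    ∃ (d : V → ℝ) (U : Matrix V V ℝ),
      Multiset.map d Finset.univ.val = σ ∧ Uᵀ * U = 1 ∧
      inS G (U * Matrix.diagonal d * Uᵀ) ∧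
      ∀ y ∈ Y, ∀ i, U.mulVec y i ≠ 0

/-- The partial join `(G₁, X) ∨ G₂`: the disjoint union of `G₁` and `G₂` together with all
edges joining vertices of `X ⊆ V(G₁)` to vertices of `G₂`. -/
def partialJoin {α β : Type*} (G₁ : SimpleGraph α) (X : Set α) (G₂ : SimpleGraph β) :
    SimpleGraph (α ⊕ β) where
  Adj x y :=
    (∃ a b, G₁.Adj a b ∧ x = Sum.inl a ∧ y = Sum.inl b) ∨
    (∃ a b, G₂.Adj a b ∧ x = Sum.inr a ∧ y = Sum.inr b) ∨
    (∃ a ∈ X, ∃ b, x = Sum.inl a ∧ y = Sum.inr b) ∨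
    (∃ a ∈ X, ∃ b, x = Sum.inr b ∧ y = Sum.inl a)
  symm := by
    constructor
    rintro x y (⟨a, b, hab, rfl, rfl⟩ | ⟨a, b, hab, rfl, rfl⟩ | ⟨a, ha, b, rfl, rfl⟩ |
      ⟨a, ha, b, rfl, rfl⟩)
    · exact Or.inl ⟨b, a, hab.symm, rfl, rfl⟩
    · exact Or.inr (Or.inl ⟨b, a, hab.symm, rfl, rfl⟩)
    · exact Or.inr (Or.inr (Or.inr ⟨a, ha, b, rfl, rfl⟩))
    · exact Or.inr (Or.inr (Or.inl ⟨a, ha, b, rfl, rfl⟩))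
  loopless := by
    constructor
    rintro x (⟨a, b, hab, rfl, h⟩ | ⟨a, b, hab, rfl, h⟩ | ⟨a, ha, b, rfl, h⟩ | ⟨a, ha, b, rfl, h⟩)
    · cases h; exact hab.ne rfl
    · cases h; exact hab.ne rfl
    · exact (Sum.inl_ne_inr h).elim
    · exact (Sum.inr_ne_inl h).elim

/-- The join `G₁ ∨ G₂` of two graphs. -/
def graphJoin {α β : Type*} (G₁ : SimpleGraph α) (G₂ : SimpleGraph β) : SimpleGraph (α ⊕ β) :=
  partialJoin G₁ Set.univ G₂

/-- The disjoint union of a family of graphs. -/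
def sigmaGraph {ι : Type*} {α : ι → Type*} (G : ∀ i, SimpleGraph (α i)) :
    SimpleGraph (Σ i, α i) where
  Adj x y := ∃ (i : ι) (a b : α i), (G i).Adj a b ∧ x = ⟨i, a⟩ ∧ y = ⟨i, b⟩
  symm := by
    constructor
    rintro x y ⟨i, a, b, hab, rfl, rfl⟩
    exact ⟨i, b, a, hab.symm, rfl, rfl⟩
  loopless := by
    constructor
    rintro x ⟨i, a, b, hab, rfl, h⟩
    obtain rfl : a = b := by simpa using h
    exact hab.ne rfl

theorem tree_ker {V : Type*} [Fintype V] [DecidableEq V] (G : SimpleGraph V) (hG : G.IsTree)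
    (M : Matrix V V ℝ) (hs : M.IsSymm) (hM : ∀ i j, i ≠ j → (M i j ≠ 0 ↔ G.Adj i j))
    (hp : ∀ x : V → ℝ, 0 ≤ x ⬝ᵥ M *ᵥ x) (x : V → ℝ) (hx : M *ᵥ x = 0) (v : V) (hv : x v = 0) :
    x = 0 := by
  classical
  -- PSD isotropic vectors are in the kernel
  have key : ∀ y : V → ℝ, y ⬝ᵥ M *ᵥ y = 0 → M *ᵥ y = 0 := by
    intro y hy
    have hps : M.PosSemidef := by
      refine Matrix.PosSemidef.of_dotProduct_mulVec_nonneg ?_ ?_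
      · rw [Matrix.IsHermitian, Matrix.conjTranspose_eq_transpose_of_trivial]; exact hs
      · intro x; simpa using hp x
    have := (hps.dotProduct_mulVec_zero_iff y).1 (by simpa using hy)
    exact this
  have step : ∀ v w, G.Adj v w → x v = 0 → x w = 0 := by
    intro v w hvw hv
    have hb := (SimpleGraph.isAcyclic_iff_forall_isBridge.1 hG.2) (e := s(v, w)) hvw
    rw [SimpleGraph.isBridge_iff] at hb
    set H := G.deleteEdges {s(v, w)} with hH
    have hcut : ∀ i j, H.Reachable w i → ¬ H.Reachable w j → M i j ≠ 0 → i = w ∧ j = v := by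
      intro i j hi hj hm
      have hij : i ≠ j := by rintro rfl; exact hj hi
      have ha := (hM i j hij).1 hm
      by_contra hne
      apply hj
      refine hi.trans (SimpleGraph.Adj.reachable ?_)
      rw [hH, SimpleGraph.deleteEdges_adj]
      refine ⟨ha, ?_⟩
      simp only [Set.mem_singleton_iff, Sym2.eq_iff]
      rintro (⟨h1, h2⟩ | ⟨h1, h2⟩)
      · apply hb; rw [← h1]; exact hi.symm
      · exact hne ⟨h1, h2⟩
    have hwv : ¬ H.Reachable w v := fun h => hb h.symm
    set y : V → ℝ := fun i => if H.Reachable w i then x i else 0 with hy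
    have hy0 : y ⬝ᵥ M *ᵥ y = 0 := by
      have : y ⬝ᵥ M *ᵥ y = y ⬝ᵥ M *ᵥ x := by
        simp only [dotProduct, mulVec]
        refine Finset.sum_congr rfl fun i _ => ?_
        by_cases hi : H.Reachable w i
        · congr 1
          refine Finset.sum_congr rfl fun j _ => ?_
          by_cases hj : H.Reachable w j
          · simp [hy, hj]
          · by_cases hm : M i j = 0
            · simp [hm]
            · obtain ⟨-, rfl⟩ := hcut i j hi hj hm
              simp [hv, hy]
        · simp [hy, hi]
      rw [this, hx]; simp
    have h1 := congrFun (key y hy0) v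
    simp only [mulVec, dotProduct, Pi.zero_apply] at h1
    rw [Finset.sum_eq_single w] at h1
    · have hm : M v w ≠ 0 := (hM v w hvw.ne).2 hvw
      have : y w = x w := by simp [hy]
      rw [this] at h1
      exact (mul_eq_zero.1 h1).resolve_left hm
    · intro j _ hj
      by_cases hr : H.Reachable w j
      · by_cases hm : M v j = 0
        · simp [hm]
        · rw [← hs.apply] at hm
          exact absurd (hcut j v hr hwv hm).1 hj
      · simp [hy, hr]
    · simp
  have walk : ∀ u w, G.Walk u w → x u = 0 → x w = 0 := by
    intro u w p
    induction p with
    | nil => exact id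
    | cons h p ih => exact fun hu => ih (step _ _ h hu)
  funext w
  obtain ⟨p⟩ := hG.1.preconnected v w
  exact walk v w p hv

theorem block_card {V W : Type*} [Fintype V] [DecidableEq V] [Fintype W] [DecidableEq W]
    (G : SimpleGraph V) (hG : G.IsTree)
    (B : Matrix V V ℝ) (hs : B.IsSymm) (hB : ∀ i j, i ≠ j → (B i j ≠ 0 ↔ G.Adj i j))
    (C : Matrix V W ℝ) (α β : ℝ) (hαβ : β < α)
    (h : (B - α • (1 : Matrix V V ℝ)) * (B - β • (1 : Matrix V V ℝ)) + C * Cᵀ = 0) :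
    Fintype.card V ≤ Fintype.card W + 2 := by
  have comm : (B - β • (1 : Matrix V V ℝ)) * (B - α • (1 : Matrix V V ℝ)) + C * Cᵀ = 0 := by
    rw [← h]; congr 1
    simp only [sub_mul, mul_sub, smul_mul_assoc, mul_smul_comm, one_mul, mul_one, smul_sub]
    rw [smul_comm α β]; abel
  have gen : ∀ (γ δ ε : ℝ), 0 < ε → ε * (γ - δ) = 1 →
      (B - γ • (1 : Matrix V V ℝ)) * (B - δ • (1 : Matrix V V ℝ)) + C * Cᵀ = 0 →
      ∀ (x : V → ℝ), 0 ≤ ε * 1 → 0 ≤ x ⬝ᵥ (γ • (1 : Matrix V V ℝ) - B) *ᵥ x := by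
    intro γ δ ε hε he hh x _
    have e1 : γ • (1 : Matrix V V ℝ) - B =
        ε • ((γ • (1 : Matrix V V ℝ) - B) * (γ • (1 : Matrix V V ℝ) - B)ᵀ + C * Cᵀ) := by
      have ht : (γ • (1 : Matrix V V ℝ) - B)ᵀ = γ • (1 : Matrix V V ℝ) - B := by
        rw [transpose_sub, hs.eq]; simp
      have : C * Cᵀ = - ((B - γ • (1 : Matrix V V ℝ)) * (B - δ • (1 : Matrix V V ℝ))) :=
        (neg_eq_of_add_eq_zero_right hh).symm
      rw [this, ht]
      have e2 : (γ • (1 : Matrix V V ℝ) - B) * (γ • (1 : Matrix V V ℝ) - B) + - ((B - γ • (1 : Matrix V V ℝ)) * (B - δ • (1 : Matrix V V ℝ))) = (γ - δ) • (γ • (1 : Matrix V V ℝ) - B) := by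
        simp only [sub_mul, mul_sub, smul_mul_assoc, mul_smul_comm, one_mul, mul_one, smul_sub, sub_smul]
        rw [smul_comm δ γ]; abel
      rw [e2, smul_smul, he, one_smul]
    rw [e1, smul_mulVec, dotProduct_smul, add_mulVec, dotProduct_add, ← mulVec_mulVec, ← mulVec_mulVec,
      dotProduct_mulVec, dotProduct_mulVec x C, ← mulVec_transpose, ← mulVec_transpose]
    have sq : ∀ {k : Type _} [Fintype k] (y : k → ℝ), 0 ≤ y ⬝ᵥ y := fun y =>
      Finset.sum_nonneg fun i _ => mul_self_nonneg _
    exact mul_nonneg hε.le (add_nonneg (sq _) (Finset.sum_nonneg fun i _ => mul_self_nonneg _))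
  have hd : 0 < α - β := sub_pos.2 hαβ
  have pA := fun x => gen α β (α - β)⁻¹ (inv_pos.2 hd) (inv_mul_cancel₀ hd.ne') h x (by positivity)
  -- lower PSD
  have pB : ∀ x : V → ℝ, 0 ≤ x ⬝ᵥ (B - β • (1 : Matrix V V ℝ)) *ᵥ x := by
    intro x
    have e1 : B - β • (1 : Matrix V V ℝ) =
        (α - β)⁻¹ • ((B - β • (1 : Matrix V V ℝ)) * (B - β • (1 : Matrix V V ℝ))ᵀ + C * Cᵀ) := by
      have ht : (B - β • (1 : Matrix V V ℝ))ᵀ = B - β • (1 : Matrix V V ℝ) := by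
        rw [transpose_sub, hs.eq]; simp
      have : C * Cᵀ = - ((B - β • (1 : Matrix V V ℝ)) * (B - α • (1 : Matrix V V ℝ))) :=
        (neg_eq_of_add_eq_zero_right comm).symm
      rw [this, ht]
      have e2 : (B - β • (1 : Matrix V V ℝ)) * (B - β • (1 : Matrix V V ℝ)) + - ((B - β • (1 : Matrix V V ℝ)) * (B - α • (1 : Matrix V V ℝ))) = (α - β) • (B - β • (1 : Matrix V V ℝ)) := by
        simp only [sub_mul, mul_sub, smul_mul_assoc, mul_smul_comm, one_mul, mul_one, smul_sub, sub_smul]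
        rw [smul_comm α β]; abel
      rw [e2, smul_smul, inv_mul_cancel₀ hd.ne', one_smul]
    rw [e1, smul_mulVec, dotProduct_smul, add_mulVec, dotProduct_add, ← mulVec_mulVec, ← mulVec_mulVec,
      dotProduct_mulVec, dotProduct_mulVec x C, ← mulVec_transpose, ← mulVec_transpose]
    exact mul_nonneg (inv_pos.2 hd).le (add_nonneg (Finset.sum_nonneg fun i _ => mul_self_nonneg _)
      (Finset.sum_nonneg fun i _ => mul_self_nonneg _))
  by_contra hcard
  push Not at hcard
  obtain ⟨v⟩ := hG.1.nonempty
  let L : (V → ℝ) →ₗ[ℝ] ((W → ℝ) × ℝ × ℝ) :=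
    (Matrix.mulVecLin Cᵀ).prod (((LinearMap.proj v).comp
      (Matrix.mulVecLin (B - β • (1 : Matrix V V ℝ)))).prod (LinearMap.proj v))
  have hker : LinearMap.ker L ≠ ⊥ := by
    apply LinearMap.ker_ne_bot_of_finrank_lt
    simp
    omega
  obtain ⟨x, hx, hx0⟩ := (Submodule.ne_bot_iff _).1 hker
  rw [LinearMap.mem_ker] at hx
  have h1 : Cᵀ *ᵥ x = 0 := congrArg Prod.fst hx
  have h2 : ((B - β • (1 : Matrix V V ℝ)) *ᵥ x) v = 0 := congrArg (fun p => p.2.1) hx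
  have h3 : x v = 0 := congrArg (fun p => p.2.2) hx
  set y := (B - β • (1 : Matrix V V ℝ)) *ᵥ x with hy
  have hy' : (α • (1 : Matrix V V ℝ) - B) *ᵥ y = 0 := by
    have := congrArg (fun M => M *ᵥ x) h
    simp only [add_mulVec, ← mulVec_mulVec, h1, zero_mulVec, mulVec_zero, add_zero] at this
    rw [← neg_sub, neg_mulVec, this, neg_zero]
  have hy0 : y = 0 := by
    refine tree_ker G hG (α • (1 : Matrix V V ℝ) - B) ?_ ?_ pA y hy' v h2
    · rw [Matrix.IsSymm, transpose_sub, hs.eq]; simp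
    · intro i j hij
      rw [← hB i j hij]; simp [hij]
  apply hx0
  refine tree_ker G hG (B - β • (1 : Matrix V V ℝ)) ?_ ?_ pB x hy0 v h3
  · rw [Matrix.IsSymm, transpose_sub, hs.eq]; simp
  · intro i j hij
    rw [← hB i j hij]; simp [hij]
theorem symm_quad {V : Type*} [Fintype V] [DecidableEq V] (A : Matrix V V ℝ) (hs : A.IsSymm)
    (α β : ℝ) (h : ∀ r ∈ A.charpoly.roots, r = α ∨ r = β) :
    (A - α • (1 : Matrix V V ℝ)) * (A - β • (1 : Matrix V V ℝ)) = 0 := by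
  have hA : A.IsHermitian := by
    rw [Matrix.IsHermitian, Matrix.conjTranspose_eq_transpose_of_trivial]; exact hs
  have hev : ∀ i, hA.eigenvalues i = α ∨ hA.eigenvalues i = β := by
    intro i
    apply h
    rw [hA.roots_charpoly_eq_eigenvalues]
    simp
  have hsp := hA.spectral_theorem
  set φ := Unitary.conjStarAlgAut ℝ (Matrix V V ℝ) hA.eigenvectorUnitary with hφ
  set D : Matrix V V ℝ := diagonal (RCLike.ofReal ∘ hA.eigenvalues) with hD
  have e : ∀ γ : ℝ, A - γ • (1 : Matrix V V ℝ) = φ (D - γ • (1 : Matrix V V ℝ)) := by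
    intro γ
    rw [map_sub, map_smul, map_one, ← hsp]
  rw [e, e, ← map_mul]
  have : (D - α • (1 : Matrix V V ℝ)) * (D - β • (1 : Matrix V V ℝ)) = 0 := by
    rw [hD, smul_one_eq_diagonal, smul_one_eq_diagonal, diagonal_sub, diagonal_sub,
      diagonal_mul_diagonal]
    rw [← diagonal_zero]
    congr 1
    funext i
    rcases hev i with h | h <;> simp [h]
  rw [this, map_zero]

theorem gj_adj_ll {α β : Type*} (G₁ : SimpleGraph α) (G₂ : SimpleGraph β) (i j : α) :
    (graphJoin G₁ G₂).Adj (Sum.inl i) (Sum.inl j) ↔ G₁.Adj i j := by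
  simp [graphJoin, partialJoin]

theorem gj_adj_rr {α β : Type*} (G₁ : SimpleGraph α) (G₂ : SimpleGraph β) (i j : β) :
    (graphJoin G₁ G₂).Adj (Sum.inr i) (Sum.inr j) ↔ G₂.Adj i j := by
  simp [graphJoin, partialJoin]

theorem gj_adj_lr {α β : Type*} (G₁ : SimpleGraph α) (G₂ : SimpleGraph β) (i : α) (j : β) :
    (graphJoin G₁ G₂).Adj (Sum.inl i) (Sum.inr j) := by
  simp [graphJoin, partialJoin]

theorem necessity {V W : Type*} [Fintype V] [DecidableEq V] [Fintype W] [DecidableEq W]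
    (G₁ : SimpleGraph V) (G₂ : SimpleGraph W) (h₁ : G₁.IsTree) (h₂ : G₂.IsTree)
    (A : Matrix (V ⊕ W) (V ⊕ W) ℝ) (hA : inS (graphJoin G₁ G₂) A) (α β : ℝ) (hlt : β < α)
    (hq : (A - α • (1 : Matrix _ _ ℝ)) * (A - β • (1 : Matrix _ _ ℝ)) = 0) :
    Fintype.card V ≤ Fintype.card W + 2 ∧ Fintype.card W ≤ Fintype.card V + 2 := by
  obtain ⟨hs, hp⟩ := hA
  have hC : A.toBlocks₂₁ = A.toBlocks₁₂ᵀ := by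
    ext i j; exact (hs.apply _ _)
  rw [← fromBlocks_toBlocks A, ← fromBlocks_one, fromBlocks_smul, fromBlocks_smul,
    sub_eq_add_neg, sub_eq_add_neg, fromBlocks_neg, fromBlocks_neg,
    fromBlocks_add, fromBlocks_add, fromBlocks_multiply, ← fromBlocks_zero, fromBlocks_inj] at hq
  obtain ⟨e1, -, -, e2⟩ := hq
  constructor
  · refine block_card G₁ h₁ A.toBlocks₁₁ ?_ ?_ A.toBlocks₁₂ α β hlt ?_
    · ext i j; exact (hs.apply _ _)
    · intro i j hij
      rw [← gj_adj_ll G₁ G₂]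
      exact hp _ _ (by simpa using hij)
    · rw [← hC, ← e1]; simp [sub_eq_add_neg]
  · refine block_card G₂ h₂ A.toBlocks₂₂ ?_ ?_ A.toBlocks₂₁ α β hlt ?_
    · ext i j; exact (hs.apply _ _)
    · intro i j hij
      rw [← gj_adj_rr G₁ G₂]
      exact hp _ _ (by simpa using hij)
    · have : A.toBlocks₂₁ᵀ = A.toBlocks₁₂ := by rw [hC, transpose_transpose]
      rw [this, ← e2]; simp [sub_eq_add_neg, add_comm]

theorem two_le_qMat {V W : Type*} [Fintype V] [DecidableEq V] [Fintype W] [DecidableEq W]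
    [Nonempty V] [Nonempty W]
    (G₁ : SimpleGraph V) (G₂ : SimpleGraph W)
    (A : Matrix (V ⊕ W) (V ⊕ W) ℝ) (hA : inS (graphJoin G₁ G₂) A) : 2 ≤ qMat A := by
  by_contra hlt
  have hc : (specMultiset A).toFinset.card ≤ 1 := by unfold qMat at hlt; omega
  obtain ⟨v⟩ := ‹Nonempty V›
  obtain ⟨w⟩ := ‹Nonempty W›
  obtain ⟨γ, hγ⟩ := Finset.card_le_one_iff_subset_singleton.1 hc
  have hsq := symm_quad A hA.1 γ γ (by
    intro r hr
    have : r ∈ (specMultiset A).toFinset := by simpa [specMultiset] using hr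
    have := hγ this
    simp at this
    exact Or.inl this)
  have hz : A - γ • (1 : Matrix _ _ ℝ) = 0 := by
    have ht : (A - γ • (1 : Matrix _ _ ℝ))ᴴ = A - γ • (1 : Matrix _ _ ℝ) := by
      rw [Matrix.conjTranspose_eq_transpose_of_trivial, transpose_sub, hA.1.eq]; simp
    rw [← Matrix.conjTranspose_mul_self_eq_zero, ht]; exact hsq
  have h1 := (hA.2 (Sum.inl v) (Sum.inr w) (by simp)).2 (gj_adj_lr _ _ _ _)
  apply h1
  have := congrFun (congrFun hz (Sum.inl v)) (Sum.inr w)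
  simpa using this

theorem qMat_le_two {V : Type*} [Fintype V] [DecidableEq V]
    (A : Matrix V V ℝ) (hA : A * A = 1) : qMat A ≤ 2 := by
  have : (specMultiset A).toFinset ⊆ {1, -1} := by
    intro r hr
    rw [Multiset.mem_toFinset, specMultiset, Polynomial.mem_roots (A.charpoly_monic.ne_zero)] at hr
    have hdet : (Matrix.scalar V r - A).det = 0 := by
      rw [← Matrix.eval_charpoly]; exact hr
    obtain ⟨x, hx0, hx⟩ := Matrix.exists_mulVec_eq_zero_iff.2 hdet
    have hx' : A *ᵥ x = r • x := by
      rw [sub_mulVec, sub_eq_zero] at hx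
      rw [← hx]; ext i; simp [Matrix.scalar, mulVec_diagonal]
    have h2 : (r * r) • x = x := by
      have : A *ᵥ (A *ᵥ x) = x := by rw [mulVec_mulVec, hA, one_mulVec]
      rw [hx', mulVec_smul, hx', smul_smul] at this
      exact this
    have h3 : (r * r - 1) • x = 0 := by rw [sub_smul, h2, one_smul, sub_self]
    have h4 := (smul_eq_zero.1 h3).resolve_right hx0
    have : r = 1 ∨ r = -1 := mul_self_eq_one_iff.1 (by linarith)
    simpa using this
  exact (Finset.card_le_card this).trans Finset.card_le_two
/-- Strong spectral property relative to a symmetric relation. -/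
def SSPN {W : Type*} [Fintype W] (N : W → W → Prop) (A : Matrix W W ℝ) : Prop :=
  ∀ X : Matrix W W ℝ, X.IsSymm → (∀ i j, ¬ N i j → X i j = 0) → A * X = X * A → X = 0

/-- Symmetric matrices supported on `N`. -/
def suppSub {W : Type*} (N : W → W → Prop) : Submodule ℝ (Matrix W W ℝ) where
  carrier := {X | X.IsSymm ∧ ∀ i j, ¬ N i j → X i j = 0}
  add_mem' := by
    rintro X Y ⟨h1, h2⟩ ⟨h3, h4⟩
    exact ⟨h1.add h3, fun i j h => by simp [h2 i j h, h4 i j h]⟩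
  zero_mem' := ⟨by simp [Matrix.IsSymm], fun i j _ => rfl⟩
  smul_mem' := by
    rintro c X ⟨h1, h2⟩
    exact ⟨h1.smul c, fun i j h => by simp [h2 i j h]⟩

open Classical in
/-- Projection on matrices supported on `N`. -/
noncomputable def suppProj {W : Type*} (N : W → W → Prop) (hN : ∀ i j, N i j → N j i) :
    Matrix W W ℝ →ₗ[ℝ] suppSub N where
  toFun Z := ⟨Matrix.of fun i j => if N i j then (Z i j + Z j i) / 2 else 0, by
    constructor
    · ext i j
      have : N i j ↔ N j i := ⟨hN _ _, hN _ _⟩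
      simp [this, add_comm, Matrix.transpose_apply]
    · intro i j h
      simp [h]⟩
  map_add' X Y := by
    ext i j
    simp only [Matrix.add_apply, Submodule.coe_add, Matrix.of_apply]
    split_ifs <;> ring
  map_smul' c X := by
    ext i j
    simp only [Matrix.smul_apply, Submodule.coe_smul, smul_eq_mul, RingHom.id_apply, Matrix.of_apply]
    split_ifs <;> ring

theorem suppProj_inner {W : Type*} [Fintype W] (N : W → W → Prop) (hN : ∀ i j, N i j → N j i)
    (X : suppSub N) (Z : Matrix W W ℝ) :
    ∑ i, ∑ j, X.1 i j * (suppProj N hN Z).1 i j = ∑ i, ∑ j, X.1 i j * Z i j := by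
  classical
  have e1 : ∑ i, ∑ j, X.1 i j * (suppProj N hN Z).1 i j
      = ∑ i, ∑ j, (X.1 i j * Z i j / 2 + X.1 i j * Z j i / 2) := by
    refine Finset.sum_congr rfl fun i _ => Finset.sum_congr rfl fun j _ => ?_
    by_cases h : N i j
    · simp [suppProj, h]; ring
    · simp [X.2.2 i j h]
  have e2 : ∑ i, ∑ j, X.1 i j * Z j i / 2 = ∑ i, ∑ j, X.1 i j * Z i j / 2 := by
    rw [Finset.sum_comm]
    refine Finset.sum_congr rfl fun i _ => Finset.sum_congr rfl fun j _ => ?_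
    rw [X.2.1.apply]
  rw [e1]
  simp only [Finset.sum_add_distrib]
  rw [e2]
  simp only [← Finset.sum_add_distrib]
  refine Finset.sum_congr rfl fun i _ => Finset.sum_congr rfl fun j _ => ?_
  ring

open scoped Matrix.Norms.Operator in
theorem sspn_open {W : Type*} [Fintype W] [DecidableEq W] (N : W → W → Prop) (A₀ : Matrix W W ℝ)
    (h : SSPN N A₀) : ∀ᶠ A in nhds A₀, SSPN N A := by
  let Φ : Matrix W W ℝ → (suppSub N →L[ℝ] Matrix W W ℝ) := fun A =>
    (ContinuousLinearMap.mul ℝ (Matrix W W ℝ) A - (ContinuousLinearMap.mul ℝ (Matrix W W ℝ)).flip A).comp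
      (suppSub N).subtypeL
  have hΦ : Continuous Φ := by
    refine Continuous.clm_comp ?_ continuous_const
    exact (ContinuousLinearMap.continuous _).sub (ContinuousLinearMap.continuous _)
  have hiff : ∀ A, SSPN N A ↔ Function.Injective (Φ A) := by
    intro A
    rw [injective_iff_map_eq_zero]
    constructor
    · intro hA X hX
      have hX' : A * X.1 - X.1 * A = 0 := hX
      exact Subtype.ext (hA X.1 X.2.1 X.2.2 (sub_eq_zero.1 hX'))
    · intro hA X h1 h2 h3
      have := hA ⟨X, h1, h2⟩ (show A * X - X * A = 0 from sub_eq_zero.2 h3)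
      exact congrArg Subtype.val this
  have := (ContinuousLinearMap.isOpen_injective (𝕜 := ℝ) (E := suppSub N) (F := Matrix W W ℝ)).preimage hΦ
  filter_upwards [this.mem_nhds ((hiff A₀).1 h)] with A hA
  exact (hiff A).2 hA

open scoped Matrix.Norms.Operator in
theorem perturb {W : Type*} [Fintype W] [DecidableEq W] (N : W → W → Prop)
    (hN : ∀ i j, N i j → N j i) (A₀ : Matrix W W ℝ) (hs : A₀.IsSymm) (h1 : A₀ * A₀ = 1)
    (h : SSPN N A₀) (P : Matrix W W ℝ → Prop) (hP : ∀ᶠ A in nhds A₀, P A)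
    (Y : Matrix W W ℝ) (hY : Y.IsSymm) (hYN : ∀ i j, ¬ N i j → Y i j = 0) :
    ∃ t : ℝ, t ≠ 0 ∧ ∃ A, P A ∧ A.IsSymm ∧ A * A = 1 ∧
      ∀ i j, N i j → A i j = A₀ i j + t * Y i j := by
  classical
  let Pr := LinearMap.toContinuousLinearMap (suppProj N hN)
  let K : suppSub N →L[ℝ] Matrix W W ℝ :=
    ((ContinuousLinearMap.mul ℝ (Matrix W W ℝ)).flip A₀ - ContinuousLinearMap.mul ℝ (Matrix W W ℝ) A₀).comp
      (suppSub N).subtypeL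
  have hK : ∀ X, K X = X.1 * A₀ - A₀ * X.1 := fun X => rfl
  let R := (ContinuousLinearMap.mul ℝ (Matrix W W ℝ)).flip A₀
  let F : suppSub N → Matrix W W ℝ := fun X => NormedSpace.exp (K X) * A₀
  have hexp : HasStrictFDerivAt (fun X => NormedSpace.exp (K X)) K 0 := by
    have h0 : HasStrictFDerivAt (NormedSpace.exp : Matrix W W ℝ → Matrix W W ℝ)
      (1 : Matrix W W ℝ →L[ℝ] Matrix W W ℝ) (K 0) := by
      rw [map_zero]; exact hasStrictFDerivAt_exp_zero
    exact h0.comp (0 : suppSub N) K.hasStrictFDerivAt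
  have hF : HasStrictFDerivAt F (R.comp K) 0 := by
    have := R.hasStrictFDerivAt.comp (0 : suppSub N) hexp
    exact this
  have hG : HasStrictFDerivAt (fun X => Pr (F X)) (Pr.comp (R.comp K)) 0 :=
    Pr.hasStrictFDerivAt.comp (0 : suppSub N) hF
  have hF0 : F 0 = A₀ := by simp [F]
  have hinj : Function.Injective (Pr.comp (R.comp K)) := by
    rw [injective_iff_map_eq_zero]
    intro X hX
    have e0 : ∑ i, ∑ j, X.1 i j * ((X.1 * A₀ - A₀ * X.1) * A₀) i j = 0 := by
      rw [← suppProj_inner N hN]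
      have : suppProj N hN ((X.1 * A₀ - A₀ * X.1) * A₀) = 0 := hX
      rw [this]; simp
    have e1 : ((X.1 * A₀ - A₀ * X.1)ᵀ * (X.1 * A₀ - A₀ * X.1)).trace = 0 := by
      have tr : ∀ Z : Matrix W W ℝ, ∑ i, ∑ j, X.1 i j * Z i j = (X.1 * Z).trace := by
        intro Z
        simp only [Matrix.trace, Matrix.diag, Matrix.mul_apply]
        rw [Finset.sum_comm]
        refine Finset.sum_congr rfl fun i _ => Finset.sum_congr rfl fun j _ => ?_
        rw [X.2.1.apply]
      rw [tr] at e0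
      have hXt : X.1ᵀ = X.1 := X.2.1
      rw [transpose_sub, transpose_mul, transpose_mul, hs.eq, hXt]
      have t1 : (A₀ * X.1 * (X.1 * A₀)).trace = (X.1 * X.1).trace := by
        rw [Matrix.trace_mul_comm, Matrix.mul_assoc, ← Matrix.mul_assoc A₀, h1, Matrix.one_mul]
      have t2 : (X.1 * A₀ * (A₀ * X.1)).trace = (X.1 * X.1).trace := by
        rw [Matrix.mul_assoc, ← Matrix.mul_assoc A₀, h1, Matrix.one_mul]
      have t3 : (A₀ * X.1 * (A₀ * X.1)).trace = (X.1 * A₀ * (X.1 * A₀)).trace := by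
        rw [Matrix.mul_assoc, Matrix.trace_mul_comm]; simp only [Matrix.mul_assoc]
      have t4 : (X.1 * ((X.1 * A₀ - A₀ * X.1) * A₀)).trace
          = (X.1 * X.1).trace - (X.1 * A₀ * (X.1 * A₀)).trace := by
        rw [sub_mul, Matrix.mul_assoc X.1 A₀, h1, Matrix.mul_one, Matrix.mul_sub, Matrix.trace_sub]
        simp only [Matrix.mul_assoc]
      rw [t4] at e0
      simp only [Matrix.sub_mul, Matrix.mul_sub, Matrix.trace_sub, t1, t2, t3]
      linarith
    have e2 : X.1 * A₀ - A₀ * X.1 = 0 := by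
      rw [← Matrix.conjTranspose_eq_transpose_of_trivial] at e1
      exact Matrix.trace_conjTranspose_mul_self_eq_zero_iff.1 e1
    exact Subtype.ext (h X.1 X.2.1 X.2.2 (sub_eq_zero.1 e2).symm)
  have hsurj : Function.Surjective (Pr.comp (R.comp K)) :=
    (LinearMap.injective_iff_surjective (f := ((Pr.comp (R.comp K) : suppSub N →L[ℝ] suppSub N) : suppSub N →ₗ[ℝ] suppSub N))).1 hinj
  have hmap := hG.map_nhds_eq_of_surj (LinearMap.range_eq_top.2 hsurj)
  have hFc : Filter.Tendsto F (nhds 0) (nhds A₀) := by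
    have := hF.continuousAt; rw [ContinuousAt, hF0] at this; exact this
  have hev : ∀ᶠ Z in nhds (Pr A₀), ∃ X, P (F X) ∧ Pr (F X) = Z := by
    have hmap' : Filter.map (fun X => Pr (F X)) (nhds 0) = nhds (Pr A₀) := by
      have := hmap; simp only [hF0] at this; exact this
    rw [← hmap', Filter.eventually_map]
    filter_upwards [hFc.eventually hP] with X hX
    exact ⟨X, hX, rfl⟩
  let Y' : suppSub N := ⟨Y, hY, hYN⟩
  have hcurve : Filter.Tendsto (fun t : ℝ => Pr A₀ + t • Y') (nhdsWithin 0 {0}ᶜ) (nhds (Pr A₀)) := by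
    have : Continuous (fun t : ℝ => Pr A₀ + t • Y') := by fun_prop
    have h := this.tendsto 0
    simp only [zero_smul, add_zero] at h
    exact h.mono_left nhdsWithin_le_nhds
  obtain ⟨t, ⟨X, hPX, hX⟩, ht⟩ := ((hcurve.eventually hev).and self_mem_nhdsWithin).exists
  have hKt : (K X)ᵀ = -K X := by
    have hXt : X.1ᵀ = X.1 := X.2.1
    rw [hK, transpose_sub, transpose_mul, transpose_mul, hs.eq, hXt, neg_sub]
  have hinv : A₀⁻¹ = A₀ := Matrix.inv_eq_right_inv h1
  have hu : IsUnit A₀ := IsUnit.of_mul_eq_one A₀ h1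
  have hconj : A₀ * K X * A₀⁻¹ = - K X := by
    rw [hinv, hK, Matrix.mul_sub, Matrix.sub_mul, ← Matrix.mul_assoc A₀ A₀, h1, Matrix.one_mul,
      Matrix.mul_assoc, Matrix.mul_assoc X.1, h1, Matrix.mul_one, neg_sub]
  have hce : A₀ * NormedSpace.exp (K X) * A₀ = NormedSpace.exp (- K X) := by
    rw [← hconj, Matrix.exp_conj _ _ hu, hinv]
  have hce' : NormedSpace.exp (- K X) * A₀ = A₀ * NormedSpace.exp (K X) := by
    rw [← hce, Matrix.mul_assoc, h1, Matrix.mul_one]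
  have hei : NormedSpace.exp (K X) * NormedSpace.exp (- K X) = 1 := by
    rw [← Matrix.exp_add_of_commute (K X) (-K X) ((Commute.refl (K X)).neg_right)]; simp
  have hFs : (F X).IsSymm := by
    change (NormedSpace.exp (K X) * A₀)ᵀ = NormedSpace.exp (K X) * A₀
    rw [transpose_mul, ← Matrix.exp_transpose, hKt, hs.eq]
    have : A₀ * (NormedSpace.exp (-K X) * A₀) = NormedSpace.exp (K X) * 1 * 1 := by
      rw [hce', ← Matrix.mul_assoc, h1]; simp
    rw [← Matrix.mul_one (A₀ * _), ← h1, ← Matrix.mul_assoc, Matrix.mul_assoc A₀, this]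
    simp
  refine ⟨t, ht, F X, hPX, hFs, ?_, ?_⟩
  · change NormedSpace.exp (K X) * A₀ * (NormedSpace.exp (K X) * A₀) = 1
    rw [Matrix.mul_assoc, ← Matrix.mul_assoc A₀, hce, hei]
  · intro i j hij
    have := congrFun (congrFun (congrArg Subtype.val hX) i) j
    simp only [Submodule.coe_add, Submodule.coe_smul, Matrix.add_apply, Matrix.smul_apply, smul_eq_mul] at this
    have g : ∀ Z : Matrix W W ℝ, Z.IsSymm → (Pr Z).1 i j = Z i j := by
      intro Z hZ
      change (if N i j then (Z i j + Z j i) / 2 else 0) = _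
      rw [if_pos hij, hZ.apply]; ring
    rw [g _ hFs, g _ hs] at this
    exact this
/-- Add a new vertex, adjacent to the vertices satisfying `P`. -/
def addV {V : Type*} (G : SimpleGraph V) (P : V → Prop) : SimpleGraph (Option V) where
  Adj x y := match x, y with
    | none, none => False
    | none, some a => P a
    | some a, none => P a
    | some a, some b => G.Adj a b
  symm := by
    constructor
    intro x y h
    cases x <;> cases y <;> first | exact h | exact SimpleGraph.Adj.symm h
  loopless := by
    constructor
    intro x h
    cases x
    · exact h
    · exact G.loopless.irrefl _ h

/-- Non-edges of the join. -/
def joinNE {V W : Type*} (G₁ : SimpleGraph V) (G₂ : SimpleGraph W) : V ⊕ W → V ⊕ W → Prop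
  | Sum.inl i, Sum.inl j => i ≠ j ∧ ¬ G₁.Adj i j
  | Sum.inr i, Sum.inr j => i ≠ j ∧ ¬ G₂.Adj i j
  | Sum.inl _, Sum.inr _ => False
  | Sum.inr _, Sum.inl _ => False

theorem joinNE_symm {V W : Type*} (G₁ : SimpleGraph V) (G₂ : SimpleGraph W) (x y : V ⊕ W)
    (h : joinNE G₁ G₂ x y) : joinNE G₁ G₂ y x := by
  rcases x with i | i <;> rcases y with j | j
  · exact ⟨h.1.symm, fun h' => h.2 h'.symm⟩
  · exact h
  · exact h
  · exact ⟨h.1.symm, fun hh => h.2 hh.symm⟩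

/-- Realisability of the join by an orthogonal symmetric matrix with a strong property. -/
def Rz {V W : Type*} [Fintype V] [DecidableEq V] [Fintype W] [DecidableEq W]
    (G₁ : SimpleGraph V) (G₂ : SimpleGraph W) : Prop :=
  ∃ A : Matrix (V ⊕ W) (V ⊕ W) ℝ, A.IsSymm ∧ A * A = 1 ∧
    (∀ i j, i ≠ j → (A (Sum.inl i) (Sum.inl j) ≠ 0 ↔ G₁.Adj i j)) ∧
    (∀ i j, i ≠ j → (A (Sum.inr i) (Sum.inr j) ≠ 0 ↔ G₂.Adj i j)) ∧
    (∀ i j, A (Sum.inl i) (Sum.inr j) ≠ 0) ∧ SSPN (joinNE G₁ G₂) A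

/-- Polynomial whose value at `μ` is `(adj (μ - M) c) i`. -/
noncomputable def adjPoly {V : Type*} [Fintype V] [DecidableEq V] (M : Matrix V V ℝ) (c : V → ℝ)
    (i : V) : Polynomial ℝ :=
  ∑ j, (M.charmatrix).adjugate i j * Polynomial.C (c j)

theorem adjPoly_eval {V : Type*} [Fintype V] [DecidableEq V] (M : Matrix V V ℝ) (c : V → ℝ)
    (i : V) (μ : ℝ) :
    (adjPoly M c i).eval μ = ((μ • (1 : Matrix V V ℝ) - M).adjugate *ᵥ c) i := by
  have h : (M.charmatrix).map (Polynomial.evalRingHom μ) = μ • (1 : Matrix V V ℝ) - M := by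
    ext a b
    by_cases hab : a = b
    · subst hab; simp [Matrix.charmatrix_apply]
    · simp [Matrix.charmatrix_apply, hab]
  have h2 : ∀ a b, Polynomial.eval μ (M.charmatrix.adjugate a b)
      = (μ • (1 : Matrix V V ℝ) - M).adjugate a b := by
    intro a b
    rw [← h]
    have := RingHom.map_adjugate (Polynomial.evalRingHom μ) M.charmatrix
    have := congrFun (congrFun this a) b
    simpa using this
  simp [adjPoly, Polynomial.eval_finset_sum, h2, mulVec, dotProduct]

theorem adjPoly_ne_zero {V : Type*} [Fintype V] [DecidableEq V] (M : Matrix V V ℝ) (c : V → ℝ)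
    (i : V) (hc : c i ≠ 0) : adjPoly M c i ≠ 0 := by
  intro h0
  have h1 : ∀ μ : ℝ, ((μ • (1 : Matrix V V ℝ) - M).adjugate *ᵥ c) i = 0 := by
    intro μ; rw [← adjPoly_eval, h0, Polynomial.eval_zero]
  have h2 : ∀ ε : ℝ, ε ≠ 0 → (((1 : Matrix V V ℝ) - ε • M).adjugate *ᵥ c) i = 0 := by
    intro ε hε
    have : (1 : Matrix V V ℝ) - ε • M = ε • (ε⁻¹ • (1 : Matrix V V ℝ) - M) := by
      rw [smul_sub, smul_smul, mul_inv_cancel₀ hε, one_smul]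
    rw [this, Matrix.adjugate_smul, smul_mulVec, Pi.smul_apply, h1, smul_zero]
  have hcont : Continuous fun ε : ℝ => (((1 : Matrix V V ℝ) - ε • M).adjugate *ᵥ c) i := by
    have : Continuous fun ε : ℝ => ((1 : Matrix V V ℝ) - ε • M).adjugate *ᵥ c :=
      Continuous.matrix_mulVec (Continuous.matrix_adjugate (by fun_prop)) continuous_const
    exact (continuous_apply i).comp this
  have h3 := hcont.tendsto 0
  have h4 : Filter.Tendsto (fun ε : ℝ => (((1 : Matrix V V ℝ) - ε • M).adjugate *ᵥ c) i)
      (nhdsWithin 0 {0}ᶜ) (nhds 0) := by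
    refine tendsto_const_nhds.congr' ?_
    filter_upwards [self_mem_nhdsWithin] with ε hε
    exact (h2 ε hε).symm
  have h5 := tendsto_nhds_unique (h3.mono_left nhdsWithin_le_nhds) h4
  simp at h5
  exact hc h5

theorem exists_param (p : Polynomial ℝ) (hp : p ≠ 0) : ∃ μ : ℝ, -1 < μ ∧ μ < 1 ∧ p.eval μ ≠ 0 := by
  obtain ⟨μ, hμ, hr⟩ := (Set.Ioo_infinite (show (-1 : ℝ) < 1 by norm_num)).exists_notMem_finset
    p.roots.toFinset
  refine ⟨μ, hμ.1, hμ.2, fun h => hr ?_⟩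
  simp [hp, h]

/-- The unperturbed matrix. -/
def baseMat {V W : Type*} (A : Matrix (V ⊕ W) (V ⊕ W) ℝ) (μ s : ℝ) :
    Matrix (Option V ⊕ Option W) (Option V ⊕ Option W) ℝ
  | Sum.inl (some i), Sum.inl (some j) => A (Sum.inl i) (Sum.inl j)
  | Sum.inl (some i), Sum.inr (some j) => A (Sum.inl i) (Sum.inr j)
  | Sum.inr (some i), Sum.inl (some j) => A (Sum.inr i) (Sum.inl j)
  | Sum.inr (some i), Sum.inr (some j) => A (Sum.inr i) (Sum.inr j)
  | Sum.inl none, Sum.inl none => μ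
  | Sum.inl none, Sum.inr none => s
  | Sum.inr none, Sum.inl none => s
  | Sum.inr none, Sum.inr none => -μ
  | Sum.inl (some _), Sum.inl none => 0
  | Sum.inl (some _), Sum.inr none => 0
  | Sum.inr (some _), Sum.inl none => 0
  | Sum.inr (some _), Sum.inr none => 0
  | Sum.inl none, Sum.inl (some _) => 0
  | Sum.inl none, Sum.inr (some _) => 0
  | Sum.inr none, Sum.inl (some _) => 0
  | Sum.inr none, Sum.inr (some _) => 0

theorem baseMat_symm {V W : Type*} (A : Matrix (V ⊕ W) (V ⊕ W) ℝ) (hA : A.IsSymm) (μ s : ℝ) :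
    (baseMat A μ s).IsSymm := by
  ext x y
  rcases x with (_ | i) | (_ | i) <;> rcases y with (_ | j) | (_ | j) <;>
    simp [baseMat, Matrix.transpose_apply, hA.apply]

theorem baseMat_sq {V W : Type*} [Fintype V] [DecidableEq V] [Fintype W] [DecidableEq W]
    (A : Matrix (V ⊕ W) (V ⊕ W) ℝ) (hA : A * A = 1) (μ s : ℝ) (h : μ * μ + s * s = 1) :
    baseMat A μ s * baseMat A μ s = 1 := by
  have key : ∀ x y, ∑ i, A x (Sum.inl i) * A (Sum.inl i) y + ∑ j, A x (Sum.inr j) * A (Sum.inr j) y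
      = (1 : Matrix (V ⊕ W) (V ⊕ W) ℝ) x y := by
    intro x y
    rw [← hA, Matrix.mul_apply, Fintype.sum_sum_type]
  ext x y
  rw [Matrix.mul_apply, Fintype.sum_sum_type, Fintype.sum_option, Fintype.sum_option]
  rcases x with (_ | i) | (_ | i) <;> rcases y with (_ | j) | (_ | j) <;>
    simp [baseMat, key, Matrix.one_apply] <;> linarith

theorem baseMat_ssp {V W : Type*} [Fintype V] [DecidableEq V] [Fintype W] [DecidableEq W]
    (G₁ : SimpleGraph V) (G₂ : SimpleGraph W)
    (A : Matrix (V ⊕ W) (V ⊕ W) ℝ) (hA : SSPN (joinNE G₁ G₂) A) (μ s : ℝ)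
    (hB : (μ • (1 : Matrix V V ℝ) - A.toBlocks₁₁).det ≠ 0)
    (hD : (μ • (1 : Matrix W W ℝ) - - A.toBlocks₂₂).det ≠ 0) :
    SSPN (joinNE (addV G₁ fun _ => False) (addV G₂ fun _ => False)) (baseMat A μ s) := by
  intro X hX hN hc
  let f : V ⊕ W → Option V ⊕ Option W := Sum.map some some
  have hlr : ∀ i j, X (Sum.inl i) (Sum.inr j) = 0 := fun i j => hN _ _ (fun h => h)
  have hrl : ∀ i j, X (Sum.inr i) (Sum.inl j) = 0 := fun i j => hN _ _ (fun h => h)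
  have hnl : X (Sum.inl none) (Sum.inl none) = 0 := hN _ _ (fun h => h.1 rfl)
  have hnr : X (Sum.inr none) (Sum.inr none) = 0 := hN _ _ (fun h => h.1 rfl)
  have hent : ∀ x y, (baseMat A μ s * X) x y = (X * baseMat A μ s) x y := fun x y => by rw [hc]
  simp only [Matrix.mul_apply, Fintype.sum_sum_type, Fintype.sum_option] at hent
  have h0 : X.submatrix f f = 0 := by
    apply hA
    · ext x y; exact hX.apply _ _
    · rintro (i | i) (j | j) h
      · refine hN _ _ fun h' => h ⟨fun e => h'.1 (by rw [e]), fun e => h'.2 e⟩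
      · exact hlr _ _
      · exact hrl _ _
      · refine hN _ _ fun h' => h ⟨fun e => h'.1 (by rw [e]), fun e => h'.2 e⟩
    · ext x y
      have := hent (f x) (f y)
      rw [Matrix.mul_apply, Matrix.mul_apply, Fintype.sum_sum_type, Fintype.sum_sum_type]
      rcases x with i | i <;> rcases y with j | j <;>
        simpa [f, baseMat, hlr, hrl] using this
  have hll : ∀ i j, X (Sum.inl (some i)) (Sum.inl (some j)) = 0 := fun i j =>
    congrFun (congrFun h0 (Sum.inl i)) (Sum.inl j)
  have hrr : ∀ i j, X (Sum.inr (some i)) (Sum.inr (some j)) = 0 := fun i j =>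
    congrFun (congrFun h0 (Sum.inr i)) (Sum.inr j)
  have hx : (fun i => X (Sum.inl (some i)) (Sum.inl none)) = 0 := by
    by_contra hne
    apply hB
    refine Matrix.exists_mulVec_eq_zero_iff.1 ⟨_, hne, ?_⟩
    funext i
    have := hent (Sum.inl (some i)) (Sum.inl none)
    simp [baseMat, hlr, hrl, hll, hnl] at this
    rw [sub_mulVec, smul_mulVec, one_mulVec]
    simp only [Pi.sub_apply, Pi.smul_apply, smul_eq_mul, mulVec, dotProduct, Pi.zero_apply,
      toBlocks₁₁, Matrix.of_apply]
    rw [this]; ring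
  have hy : (fun i => X (Sum.inr (some i)) (Sum.inr none)) = 0 := by
    by_contra hne
    apply hD
    refine Matrix.exists_mulVec_eq_zero_iff.1 ⟨_, hne, ?_⟩
    funext i
    have := hent (Sum.inr (some i)) (Sum.inr none)
    simp [baseMat, hlr, hrl, hrr, hnr] at this
    rw [sub_neg_eq_add, add_mulVec, smul_mulVec, one_mulVec]
    simp only [Pi.add_apply, Pi.smul_apply, smul_eq_mul, mulVec, dotProduct, Pi.zero_apply,
      toBlocks₂₂, Matrix.of_apply]
    rw [this]; ring
  ext x y
  rcases x with (_ | i) | (_ | i) <;> rcases y with (_ | j) | (_ | j) <;>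
    simp only [hlr, hrl, hll, hrr, hnl, hnr, Matrix.zero_apply]
  · rw [hX.apply]; exact congrFun hx j
  · exact congrFun hx i
  · rw [hX.apply]; exact congrFun hy j
  · exact congrFun hy i
/-- The perturbation direction: the two new leaf edges. -/
def leafMat {V W : Type*} [DecidableEq V] [DecidableEq W] (w : V) (z : W) (τ : ℝ) :
    Matrix (Option V ⊕ Option W) (Option V ⊕ Option W) ℝ
  | Sum.inl (some i), Sum.inl none => if i = w then 1 else 0
  | Sum.inl none, Sum.inl (some i) => if i = w then 1 else 0
  | Sum.inr (some i), Sum.inr none => if i = z then τ else 0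
  | Sum.inr none, Sum.inr (some i) => if i = z then τ else 0
  | Sum.inl (some _), Sum.inl (some _) => 0
  | Sum.inl none, Sum.inl none => 0
  | Sum.inr (some _), Sum.inr (some _) => 0
  | Sum.inr none, Sum.inr none => 0
  | Sum.inl _, Sum.inr _ => 0
  | Sum.inr _, Sum.inl _ => 0

theorem ne_of_adj_eq {V : Type*} [Fintype V] [DecidableEq V] (M : Matrix V V ℝ) (p r : V → ℝ)
    (t : ℝ) (ht : t ≠ 0) (h : M *ᵥ p = t • r) (i : V) (hr : (M.adjugate *ᵥ r) i ≠ 0) : p i ≠ 0 := by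
  intro hp
  have h1 : M.adjugate *ᵥ (M *ᵥ p) = M.det • p := by
    rw [mulVec_mulVec, Matrix.adjugate_mul, smul_mulVec, one_mulVec]
  rw [h, mulVec_smul] at h1
  have h2 := congrFun h1 i
  simp only [Pi.smul_apply, hp, smul_eq_mul, mul_zero] at h2
  exact (mul_ne_zero ht hr) h2

theorem rz_step {V W : Type*} [Fintype V] [DecidableEq V] [Fintype W] [DecidableEq W]
    (G₁ : SimpleGraph V) (G₂ : SimpleGraph W) (w : V) (z : W) (h : Rz G₁ G₂) :
    Rz (addV G₁ fun i => i = w) (addV G₂ fun i => i = z) := by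
  obtain ⟨A, hs, hsq, h11, h22, h12, hssp⟩ := h
  set B := A.toBlocks₁₁ with hB
  set D := A.toBlocks₂₂ with hD
  set cz : V → ℝ := fun i => A (Sum.inl i) (Sum.inr z) with hcz
  set cw : W → ℝ := fun j => A (Sum.inl w) (Sum.inr j) with hcw
  -- choose `μ`
  obtain ⟨μ, hμ1, hμ2, hμ⟩ := exists_param
    (B.charpoly * (-D).charpoly * (∏ i, adjPoly B cz i) * (∏ j, adjPoly (-D) cw j)) (by
      refine mul_ne_zero (mul_ne_zero (mul_ne_zero B.charpoly_monic.ne_zero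
        (-D).charpoly_monic.ne_zero) ?_) ?_
      · exact Finset.prod_ne_zero_iff.2 fun i _ => adjPoly_ne_zero _ _ _ (h12 i z)
      · exact Finset.prod_ne_zero_iff.2 fun j _ => adjPoly_ne_zero _ _ _ (h12 w j))
  simp only [Polynomial.eval_mul, Polynomial.eval_prod, mul_ne_zero_iff, Finset.prod_ne_zero_iff,
    Matrix.eval_charpoly, adjPoly_eval] at hμ
  obtain ⟨⟨⟨hdB, hdD⟩, hb⟩, hc⟩ := hμ
  have hsc : ∀ (k : Type _) [Fintype k] [DecidableEq k], Matrix.scalar k μ = μ • (1 : Matrix k k ℝ) := by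
    intro k _ _; rw [Matrix.smul_one_eq_diagonal]; rfl
  rw [hsc] at hdB
  have hsc' : Matrix.scalar W μ = μ • (1 : Matrix W W ℝ) := by
    rw [Matrix.smul_one_eq_diagonal]; rfl
  rw [hsc'] at hdD
  obtain ⟨s, hs0, hμs⟩ : ∃ s : ℝ, s ≠ 0 ∧ μ * μ + s * s = 1 := by
    have hpos : 0 < 1 - μ * μ := by nlinarith
    refine ⟨Real.sqrt (1 - μ * μ), (Real.sqrt_pos.2 hpos).ne', ?_⟩
    rw [Real.mul_self_sqrt hpos.le]; ring
  set MB := (μ • (1 : Matrix V V ℝ) - B).adjugate with hMB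
  set MD := (μ • (1 : Matrix W W ℝ) - -D).adjugate with hMD
  -- choose `τ`
  obtain ⟨τ, -, -, hτ⟩ := exists_param
    (Polynomial.X * (∏ i, (Polynomial.C ((MB *ᵥ (s • Pi.single w 1)) i)
        + Polynomial.X * Polynomial.C ((MB *ᵥ cz) i)))
      * (∏ j, (Polynomial.C ((MD *ᵥ cw) j)
        + Polynomial.X * Polynomial.C ((MD *ᵥ (s • Pi.single z 1)) j)))) (by
      refine mul_ne_zero (mul_ne_zero Polynomial.X_ne_zero ?_) ?_
      · refine Finset.prod_ne_zero_iff.2 fun i _ h0 => ?_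
        have := congrArg (fun p => Polynomial.coeff p 1) h0
        simp at this
        exact hb i (Finset.mem_univ _) this
      · refine Finset.prod_ne_zero_iff.2 fun j _ h0 => ?_
        have := congrArg (fun p => Polynomial.coeff p 0) h0
        simp at this
        exact hc j (Finset.mem_univ _) this)
  simp only [Polynomial.eval_mul, Polynomial.eval_prod, mul_ne_zero_iff, Finset.prod_ne_zero_iff,
    Polynomial.eval_X, Polynomial.eval_add, Polynomial.eval_C] at hτ
  obtain ⟨⟨hτ0, hτ1⟩, hτ2⟩ := hτ
  set A₀ := baseMat A μ s with hA₀
  have hA₀s := baseMat_symm A hs μ s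
  have hA₀q := baseMat_sq A hsq μ s hμs
  have hA₀ssp := baseMat_ssp G₁ G₂ A hssp μ s hdB hdD
  -- the two test functions
  let fl : V → Option V ⊕ Option W := fun i => Sum.inl (some i)
  let fr : W → Option V ⊕ Option W := fun i => Sum.inr (some i)
  let φ : Matrix (Option V ⊕ Option W) (Option V ⊕ Option W) ℝ → V → ℝ := fun M =>
    ((-M (Sum.inr none) (Sum.inr none)) • (1 : Matrix V V ℝ) - M.submatrix fl fl).adjugate *ᵥ
      (M (Sum.inl none) (Sum.inr none) • Pi.single w 1 + τ • fun i => M (fl i) (fr z))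
  let ψ : Matrix (Option V ⊕ Option W) (Option V ⊕ Option W) ℝ → W → ℝ := fun M =>
    ((M (Sum.inl none) (Sum.inl none)) • (1 : Matrix W W ℝ) - -M.submatrix fr fr).adjugate *ᵥ
      ((fun j => M (fl w) (fr j)) + τ • (M (Sum.inl none) (Sum.inr none) • Pi.single z 1))
  have hent : ∀ x y, Continuous fun M : Matrix (Option V ⊕ Option W) (Option V ⊕ Option W) ℝ => M x y :=
    fun x y => (continuous_apply y).comp (continuous_apply x)
  have hφc : Continuous φ := by
    refine Continuous.matrix_mulVec (Continuous.matrix_adjugate ?_) ?_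
    · exact ((hent _ _).neg.smul continuous_const).sub (continuous_id.matrix_submatrix _ _)
    · refine ((hent _ _).smul continuous_const).add (Continuous.const_smul ?_ τ)
      exact continuous_pi fun i => hent _ _
  have hψc : Continuous ψ := by
    refine Continuous.matrix_mulVec (Continuous.matrix_adjugate ?_) ?_
    · exact ((hent _ _).smul continuous_const).sub (continuous_id.matrix_submatrix _ _).neg
    · refine (continuous_pi fun i => hent _ _).add (Continuous.const_smul ?_ τ)
      exact (hent _ _).smul continuous_const
  have hφ0 : ∀ i, φ A₀ i ≠ 0 := by
    intro i
    have e1 : A₀.submatrix fl fl = B := by ext a b; rfl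
    have e2 : φ A₀ = MB *ᵥ (s • Pi.single w 1 + τ • cz) := by
      simp only [φ, e1]
      simp only [hA₀, baseMat, neg_neg]
      rfl
    rw [e2, mulVec_add, mulVec_smul _ τ]
    exact hτ1 i (Finset.mem_univ _)
  have hψ0 : ∀ j, ψ A₀ j ≠ 0 := by
    intro j
    have e1 : A₀.submatrix fr fr = D := by ext a b; rfl
    have e2 : ψ A₀ = MD *ᵥ (cw + τ • (s • Pi.single z 1)) := by
      simp only [ψ, e1]
      simp only [hA₀, baseMat]
      rfl
    rw [e2, mulVec_add, mulVec_smul _ τ]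
    exact hτ2 j (Finset.mem_univ _)
  have evne : ∀ x y, A₀ x y ≠ 0 → ∀ᶠ M in nhds A₀, M x y ≠ 0 := fun x y hxy =>
    (hent x y).continuousAt.eventually_ne hxy
  have evne' : ∀ x y, ∀ᶠ M in nhds A₀, A₀ x y ≠ 0 → M x y ≠ 0 := by
    intro x y
    by_cases hxy : A₀ x y = 0
    · simp [hxy]
    · filter_upwards [evne x y hxy] with M hM _ using hM
  have ev1 : ∀ᶠ M in nhds A₀, ∀ x y, A₀ x y ≠ 0 → M x y ≠ 0 :=
    eventually_all.2 fun x => eventually_all.2 fun y => evne' x y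
  have ev2 : ∀ᶠ M in nhds A₀, ∀ i, φ M i ≠ 0 :=
    eventually_all.2 fun i => ((continuous_apply i).comp hφc).continuousAt.eventually_ne (hφ0 i)
  have ev3 : ∀ᶠ M in nhds A₀, ∀ i, ψ M i ≠ 0 :=
    eventually_all.2 fun i => ((continuous_apply i).comp hψc).continuousAt.eventually_ne (hψ0 i)
  have ev4 := sspn_open _ A₀ hA₀ssp
  obtain ⟨t, ht, M, ⟨m1, m2, m3, m4⟩, hMs, hMq, hMN⟩ := perturb _ (joinNE_symm _ _) A₀ hA₀s hA₀q hA₀ssp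
    _ (ev1.and (ev2.and (ev3.and ev4))) (leafMat w z τ)
    (by
      ext x y
      rcases x with (_ | i) | (_ | i) <;> rcases y with (_ | j) | (_ | j) <;>
        simp [leafMat, Matrix.transpose_apply])
    (by
      rintro ((_ | i) | (_ | i)) ((_ | j) | (_ | j)) hn <;>
        first | rfl | exact absurd ⟨by simp, fun hh => hh⟩ hn)
  -- exact values of leaf entries
  have v1 : ∀ i, M (Sum.inl (some i)) (Sum.inl none) = if i = w then t else 0 := by
    intro i
    rw [hMN (Sum.inl (some i)) (Sum.inl none) ⟨by simp, fun h' => h'⟩]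
    simp [hA₀, baseMat, leafMat]
  have v2 : ∀ i, M (Sum.inr (some i)) (Sum.inr none) = if i = z then t * τ else 0 := by
    intro i
    rw [hMN (Sum.inr (some i)) (Sum.inr none) ⟨by simp, fun h' => h'⟩]
    simp [hA₀, baseMat, leafMat]
  have v1' : ∀ i, M (Sum.inl none) (Sum.inl (some i)) = if i = w then t else 0 := by
    intro i; rw [hMs.apply]; exact v1 i
  have v2' : ∀ i, M (Sum.inr none) (Sum.inr (some i)) = if i = z then t * τ else 0 := by
    intro i; rw [hMs.apply]; exact v2 i
  have hee : ∀ x y, (M * M) x y = (1 : Matrix (Option V ⊕ Option W) (Option V ⊕ Option W) ℝ) x y := by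
    intro x y; rw [hMq]
  simp only [Matrix.mul_apply, Fintype.sum_sum_type, Fintype.sum_option] at hee
  have hp : ∀ i, M (Sum.inl (some i)) (Sum.inr none) ≠ 0 := by
    refine fun i => ne_of_adj_eq _ (fun i => M (Sum.inl (some i)) (Sum.inr none)) _ t ht ?_ i (m2 i)
    funext i
    have := hee (Sum.inl (some i)) (Sum.inr none)
    simp only [v1, v2, ite_mul, mul_ite, zero_mul, mul_zero, Finset.sum_ite_eq, Finset.sum_ite_eq',
      Finset.mem_univ, if_true, Matrix.one_apply, reduceCtorEq, if_false] at this
    rw [sub_mulVec, smul_mulVec, one_mulVec]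
    simp only [Pi.sub_apply, Pi.smul_apply, Pi.add_apply, smul_eq_mul, mulVec, dotProduct,
      Pi.single_apply, Matrix.submatrix_apply, fl, fr]
    split_ifs at this ⊢ <;> linarith
  have hq : ∀ j, M (Sum.inr (some j)) (Sum.inl none) ≠ 0 := by
    refine fun j => ne_of_adj_eq _ (fun j => M (Sum.inr (some j)) (Sum.inl none)) _ (-t)
      (neg_ne_zero.2 ht) ?_ j (m3 j)
    funext j
    have := hee (Sum.inr (some j)) (Sum.inl none)
    simp only [v1, v2, ite_mul, mul_ite, zero_mul, mul_zero, Finset.sum_ite_eq, Finset.sum_ite_eq',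
      Finset.mem_univ, if_true, Matrix.one_apply, reduceCtorEq, if_false] at this
    rw [sub_neg_eq_add, add_mulVec, smul_mulVec, one_mulVec]
    simp only [Pi.smul_apply, Pi.add_apply, smul_eq_mul, mulVec, dotProduct,
      Pi.single_apply, Matrix.submatrix_apply, fl, fr]
    have s1 : M (Sum.inr none) (Sum.inl none) = M (Sum.inl none) (Sum.inr none) := hMs.apply _ _
    have s2 : M (Sum.inr (some j)) (Sum.inl (some w)) = M (Sum.inl (some w)) (Sum.inr (some j)) :=
      hMs.apply _ _
    rw [s1, s2] at this
    split_ifs at this ⊢ <;> linarith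
  refine ⟨M, hMs, hMq, ?_, ?_, ?_, ?_⟩
  · rintro (_ | i) (_ | j) hij
    · exact absurd rfl hij
    · rw [v1']; simp [addV, ht]
    · rw [v1]; simp [addV, ht]
    · have hij' : i ≠ j := fun e => hij (by rw [e])
      change _ ↔ G₁.Adj i j
      rw [← h11 i j hij']
      constructor
      · intro h1 h2
        apply h1
        rw [hMN (Sum.inl (some i)) (Sum.inl (some j)) ⟨hij, fun h' => (h11 i j hij').2 h' h2⟩]
        simp [hA₀, baseMat, leafMat, h2]
      · exact m1 (Sum.inl (some i)) (Sum.inl (some j))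
  · rintro (_ | i) (_ | j) hij
    · exact absurd rfl hij
    · rw [v2']; simp [addV, ht, hτ0]
    · rw [v2]; simp [addV, ht, hτ0]
    · have hij' : i ≠ j := fun e => hij (by rw [e])
      change _ ↔ G₂.Adj i j
      rw [← h22 i j hij']
      constructor
      · intro h1 h2
        apply h1
        rw [hMN (Sum.inr (some i)) (Sum.inr (some j)) ⟨hij, fun h' => (h22 i j hij').2 h' h2⟩]
        simp [hA₀, baseMat, leafMat, h2]
      · exact m1 (Sum.inr (some i)) (Sum.inr (some j))
  · rintro (_ | i) (_ | j)
    · exact m1 _ _ hs0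
    · rw [hMs.apply]; exact hq j
    · exact hp i
    · exact m1 _ _ (h12 i j)
  · intro X hX hN hcm
    refine m4 X hX (fun x y hn => hN x y fun hn' => hn ?_) hcm
    rcases x with (_ | i) | (_ | i) <;> rcases y with (_ | j) | (_ | j) <;>
      first | exact hn' | exact ⟨hn'.1, fun h' => h'⟩
theorem rz_iso {V W V' W' : Type*} [Fintype V] [DecidableEq V] [Fintype W] [DecidableEq W]
    [Fintype V'] [DecidableEq V'] [Fintype W'] [DecidableEq W']
    {G₁ : SimpleGraph V} {G₂ : SimpleGraph W} {H₁ : SimpleGraph V'} {H₂ : SimpleGraph W'}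
    (e₁ : H₁ ≃g G₁) (e₂ : H₂ ≃g G₂) (h : Rz G₁ G₂) : Rz H₁ H₂ := by
  obtain ⟨A, hs, hsq, h11, h22, h12, hssp⟩ := h
  let e : V' ⊕ W' ≃ V ⊕ W := Equiv.sumCongr e₁.toEquiv e₂.toEquiv
  refine ⟨A.submatrix e e, ?_, ?_, ?_, ?_, ?_, ?_⟩
  · exact hs.submatrix e
  · rw [Matrix.submatrix_mul_equiv, hsq, Matrix.submatrix_one_equiv]
  · intro i j hij
    rw [← e₁.map_rel_iff]
    exact h11 _ _ (fun h => hij (e₁.injective h))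
  · intro i j hij
    rw [← e₂.map_rel_iff]
    exact h22 _ _ (fun h => hij (e₂.injective h))
  · intro i j
    exact h12 _ _
  · intro X hX hN hc
    have := hssp (X.submatrix e.symm e.symm) (hX.submatrix _) ?_ ?_
    · have h2 := congrArg (fun Z => Z.submatrix e e) this
      simpa using h2
    · intro x y hn
      refine hN _ _ fun hn' => hn ?_
      obtain ⟨x, rfl⟩ := e.surjective x
      obtain ⟨y, rfl⟩ := e.surjective y
      simp only [Equiv.symm_apply_apply] at hn'
      rcases x with i | i <;> rcases y with j | j
      · exact ⟨fun h => hn'.1 (e₁.injective h), fun h => hn'.2 (e₁.map_rel_iff.1 h)⟩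
      · exact hn'
      · exact hn'
      · exact ⟨fun h => hn'.1 (e₂.injective h), fun h => hn'.2 (e₂.map_rel_iff.1 h)⟩
    · have hA : A = (A.submatrix e e).submatrix e.symm e.symm := by simp
      rw [hA, Matrix.submatrix_mul_equiv, Matrix.submatrix_mul_equiv, hc]

theorem rz_swap {V W : Type*} [Fintype V] [DecidableEq V] [Fintype W] [DecidableEq W]
    {G₁ : SimpleGraph V} {G₂ : SimpleGraph W} (h : Rz G₁ G₂) : Rz G₂ G₁ := by
  obtain ⟨A, hs, hsq, h11, h22, h12, hssp⟩ := h
  let e : W ⊕ V ≃ V ⊕ W := Equiv.sumComm W V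
  refine ⟨A.submatrix e e, ?_, ?_, ?_, ?_, ?_, ?_⟩
  · exact hs.submatrix e
  · rw [Matrix.submatrix_mul_equiv, hsq, Matrix.submatrix_one_equiv]
  · exact h22
  · exact h11
  · intro i j
    change A (Sum.inr i) (Sum.inl j) ≠ 0
    rw [hs.apply]
    exact h12 _ _
  · intro X hX hN hc
    have := hssp (X.submatrix e.symm e.symm) (hX.submatrix _) ?_ ?_
    · have h2 := congrArg (fun Z => Z.submatrix e e) this
      simpa using h2
    · intro x y hn
      refine hN _ _ fun hn' => hn ?_
      rcases x with i | i <;> rcases y with j | j <;> exact hn'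
    · have hA : A = (A.submatrix e e).submatrix e.symm e.symm := by simp
      rw [hA, Matrix.submatrix_mul_equiv, Matrix.submatrix_mul_equiv, hc]

theorem tree_decomp {V : Type} [Fintype V] [DecidableEq V] (G : SimpleGraph V) (hG : G.IsTree)
    (hc : 1 < Fintype.card V) :
    ∃ (l : V) (G' : SimpleGraph {x // x ≠ l}) (w : {x // x ≠ l}), G'.IsTree ∧
      Nonempty (G ≃g addV G' fun i => i = w) := by
  classical
  haveI : Nontrivial V := Fintype.one_lt_card_iff_nontrivial.1 hc
  obtain ⟨l, hl⟩ := hG.exists_vert_degree_one_of_nontrivial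
  obtain ⟨w, hw, huniq⟩ := SimpleGraph.degree_eq_one_iff_existsUnique_adj.1 hl
  have hconn := hG.1.induce_compl_singleton_of_degree_eq_one hl
  let G' : SimpleGraph {x // x ≠ l} := G.comap Subtype.val
  have hG' : G'.IsTree := by
    refine ⟨hconn, ?_⟩
    exact hG.2.comap (SimpleGraph.Embedding.comap (Function.Embedding.subtype _) G).toHom Subtype.val_injective
  refine ⟨l, G', ⟨w, hw.ne'⟩, hG', ⟨?_⟩⟩
  refine RelIso.symm ⟨Equiv.optionSubtypeNe l, ?_⟩
  rintro (_ | ⟨a, ha⟩) (_ | ⟨b, hb⟩)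
  · simp [addV]
  · simp only [Equiv.optionSubtypeNe_none, Equiv.optionSubtypeNe_some, addV, Subtype.mk.injEq]
    exact ⟨fun h => huniq _ h, fun h => h ▸ hw⟩
  · simp only [Equiv.optionSubtypeNe_none, Equiv.optionSubtypeNe_some, addV, Subtype.mk.injEq]
    exact ⟨fun h => huniq _ h.symm, fun h => h ▸ hw.symm⟩
  · simp [addV, G']

theorem rz_complete {V W : Type*} [Fintype V] [DecidableEq V] [Fintype W] [DecidableEq W]
    [Nonempty V] (G₁ : SimpleGraph V) (G₂ : SimpleGraph W) (h₁ : ∀ i j, i ≠ j → G₁.Adj i j)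
    (h₂ : ∀ i j, i ≠ j → G₂.Adj i j) : Rz G₁ G₂ := by
  set n : ℝ := ((Fintype.card (V ⊕ W) : ℕ) : ℝ) with hn
  have hn0 : n ≠ 0 := by
    have : 0 < Fintype.card (V ⊕ W) := Fintype.card_pos
    rw [hn]; positivity
  let A : Matrix (V ⊕ W) (V ⊕ W) ℝ := 1 - Matrix.of fun _ _ => 2 / n
  have hoff : ∀ x y, x ≠ y → A x y ≠ 0 := by
    intro x y hxy
    simp [A, Matrix.one_apply_ne hxy, hn0]
  refine ⟨A, ?_, ?_, ?_, ?_, ?_, ?_⟩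
  · ext x y
    simp [A, Matrix.transpose_apply, Matrix.one_apply, eq_comm]
  · have : (Matrix.of fun _ _ => 2 / n : Matrix (V ⊕ W) (V ⊕ W) ℝ) * (Matrix.of fun _ _ => 2 / n)
        = (2 : ℝ) • Matrix.of fun _ _ => 2 / n := by
      ext x y
      simp only [Matrix.mul_apply, Matrix.of_apply, Finset.sum_const, Finset.card_univ, nsmul_eq_mul,
        Matrix.smul_apply, smul_eq_mul]
      rw [← hn]; field_simp
    simp only [A]
    rw [sub_mul, mul_sub, mul_sub, this, two_smul, one_mul, one_mul, mul_one]; abel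
  · exact fun i j hij => ⟨fun _ => h₁ i j hij, fun _ => hoff _ _ (by simpa using hij)⟩
  · exact fun i j hij => ⟨fun _ => h₂ i j hij, fun _ => hoff _ _ (by simpa using hij)⟩
  · exact fun i j => hoff _ _ (by simp)
  · intro X _ hN _
    ext x y
    refine hN x y fun h => ?_
    rcases x with i | i <;> rcases y with j | j
    · exact h.2 (h₁ _ _ h.1)
    · exact h
    · exact h
    · exact h.2 (h₂ _ _ h.1)

/-- The path on three vertices with centre `1`. -/
def path3 : SimpleGraph (Fin 3) where
  Adj i j := i ≠ j ∧ (i = 1 ∨ j = 1)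
  symm := ⟨fun _ _ h => ⟨h.1.symm, h.2.symm⟩⟩
  loopless := ⟨fun _ h => h.1 rfl⟩

/-- Matrix for the base case. -/
noncomputable def path3Mat : Matrix (Fin 3 ⊕ Fin 1) (Fin 3 ⊕ Fin 1) ℝ :=
  Matrix.fromBlocks !![-1/9, 4/9, 0; 4/9, 65/81, 16/81; 0, 16/81, -79/81]
    !![8/9; -28/81; -8/81] !![8/9, -28/81, -8/81] !![23/81]

theorem rz_path3 : Rz path3 (⊥ : SimpleGraph (Fin 1)) := by
  refine ⟨path3Mat, ?_, ?_, ?_, ?_, ?_, ?_⟩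
  · ext x y
    rcases x with i | i <;> rcases y with j | j <;> fin_cases i <;> fin_cases j <;>
      simp [path3Mat, Matrix.transpose_apply]
  · ext x y
    rw [Matrix.mul_apply, Fintype.sum_sum_type]
    rcases x with i | i <;> rcases y with j | j <;> fin_cases i <;> fin_cases j <;>
      simp [path3Mat, Fin.sum_univ_succ, Matrix.one_apply] <;> norm_num
  · intro i j hij
    fin_cases i <;> fin_cases j <;> simp [path3Mat, path3] at hij ⊢
  · intro i j hij
    exact absurd (Subsingleton.elim i j) hij
  · intro i j
    fin_cases i <;> fin_cases j <;> simp [path3Mat]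
  · intro X hX hN hc
    have hlr : ∀ i j, X (Sum.inl i) (Sum.inr j) = 0 := fun i j => hN _ _ (fun h => h)
    have hrl : ∀ i j, X (Sum.inr i) (Sum.inl j) = 0 := fun i j => hN _ _ (fun h => h)
    have hrr : ∀ i j, X (Sum.inr i) (Sum.inr j) = 0 := fun i j =>
      hN _ _ (fun h => h.1 (Subsingleton.elim i j))
    have hll : ∀ i j : Fin 3, ¬ (i ≠ j ∧ ¬ path3.Adj i j) → X (Sum.inl i) (Sum.inl j) = 0 :=
      fun i j h => hN _ _ h
    have h00 := hll 0 0 (by simp)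
    have h11 := hll 1 1 (by simp)
    have h22 := hll 2 2 (by simp)
    have h01 := hll 0 1 (by simp [path3])
    have h10 := hll 1 0 (by simp [path3])
    have h12 := hll 1 2 (by simp [path3])
    have h21 := hll 2 1 (by simp [path3])
    have h02 : X (Sum.inl 0) (Sum.inl 2) = 0 := by
      have := congrFun (congrFun hc (Sum.inl 0)) (Sum.inl 1)
      simp [Matrix.mul_apply, Fintype.sum_sum_type, Fin.sum_univ_succ, path3Mat, hlr, hrl, h11, h01, h00, h21] at this
      exact this
    have h20 : X (Sum.inl 2) (Sum.inl 0) = 0 := by rw [hX.apply]; exact h02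
    ext x y
    rcases x with i | i <;> rcases y with j | j
    · fin_cases i <;> fin_cases j <;> assumption
    · exact hlr _ _
    · exact hrl _ _
    · exact hrr _ _

theorem tree_card2 {V : Type} [Fintype V] [DecidableEq V] (G : SimpleGraph V) (hG : G.IsTree)
    (hc : Fintype.card V ≤ 2) (i j : V) (hij : i ≠ j) : G.Adj i j := by
  haveI : Nontrivial V := ⟨i, j, hij⟩
  obtain ⟨k, hk⟩ := hG.1.preconnected.exists_adj_of_nontrivial i
  have : k = j := by
    by_contra hkj
    have h3 : ({i, k, j} : Finset V).card ≤ 2 := (Finset.card_le_univ _).trans hc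
    rw [Finset.card_eq_three.2 ⟨i, k, j, hk.ne, hij, hkj, rfl⟩] at h3
    omega
  exact this ▸ hk

theorem rz_base3 {V W : Type} [Fintype V] [DecidableEq V] [Fintype W] [DecidableEq W]
    (G₁ : SimpleGraph V) (G₂ : SimpleGraph W) (h₁ : G₁.IsTree)
    (hV : Fintype.card V = 3) (hW : Fintype.card W = 1) : Rz G₁ G₂ := by
  obtain ⟨l, G', w, hG', ⟨e⟩⟩ := tree_decomp G₁ h₁ (by omega)
  have hc : Fintype.card {x // x ≠ l} = 2 := by
    rw [Fintype.card_subtype_compl, hV]; simp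
  obtain ⟨u, hu⟩ : ∃ u, u ≠ w := by
    haveI : Nontrivial {x // x ≠ l} := Fintype.one_lt_card_iff_nontrivial.1 (by omega)
    exact exists_ne w
  have hadj : G'.Adj u w := tree_card2 G' hG' hc.le u w hu
  let f : Fin 3 → Option {x // x ≠ l} := ![none, some w, some u]
  have hf : Function.Bijective f := by
    rw [Fintype.bijective_iff_injective_and_card]
    refine ⟨?_, by simp [hc]⟩
    intro i j
    fin_cases i <;> fin_cases j <;> simp [f, hu, hu.symm]
  let ef : path3 ≃g addV G' fun i => i = w := ⟨Equiv.ofBijective f hf, by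
    intro i j
    fin_cases i <;> fin_cases j <;> simp [f, addV, path3, hu, hadj, hadj.symm]⟩
  haveI : Subsingleton W := Fintype.card_le_one_iff_subsingleton.1 hW.le
  let e2 : G₂ ≃g (⊥ : SimpleGraph (Fin 1)) := ⟨Fintype.equivFinOfCardEq hW, by
    intro i j
    have : i = j := Subsingleton.elim _ _
    subst this
    simp⟩
  exact rz_iso (e.trans ef.symm) e2 rz_path3

theorem rz_main (n : ℕ) : ∀ (V W : Type) [Fintype V] [DecidableEq V] [Fintype W] [DecidableEq W]
    (G₁ : SimpleGraph V) (G₂ : SimpleGraph W), G₁.IsTree → G₂.IsTree →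
    Fintype.card W = n + 1 → Fintype.card W ≤ Fintype.card V → Fintype.card V ≤ Fintype.card W + 2 →
    Rz G₁ G₂ := by
  induction n with
  | zero =>
    intro V W _ _ _ _ G₁ G₂ h₁ h₂ hW hle hle2
    by_cases h3 : Fintype.card V = 3
    · exact rz_base3 G₁ G₂ h₁ h3 (by omega)
    · haveI := h₁.1.nonempty
      exact rz_complete G₁ G₂ (tree_card2 G₁ h₁ (by omega)) (tree_card2 G₂ h₂ (by omega))
  | succ n ih =>
    intro V W _ _ _ _ G₁ G₂ h₁ h₂ hW hle hle2
    obtain ⟨l, H, w, hH, ⟨e⟩⟩ := tree_decomp G₁ h₁ (by omega)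
    obtain ⟨m, K, z, hK, ⟨f⟩⟩ := tree_decomp G₂ h₂ (by omega)
    have c1 : Fintype.card {x // x ≠ l} = Fintype.card V - 1 := by
      rw [Fintype.card_subtype_compl]; simp
    have c2 : Fintype.card {x // x ≠ m} = Fintype.card W - 1 := by
      rw [Fintype.card_subtype_compl]; simp
    exact rz_iso e f (rz_step H K w z (ih _ _ H K hH hK (by omega) (by omega) (by omega)))

/-- Example 3.5, last part: for trees `T₁, T₂`,
`q(T₁ ∨ T₂) = 2` iff `||T₁| − |T₂|| ≤ 2`. -/
theorem statement11 (a b : ℕ)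
    (T₁ : SimpleGraph (Fin a)) (T₂ : SimpleGraph (Fin b))
    (h₁ : T₁.IsTree) (h₂ : T₂.IsTree) :
    qGraph (graphJoin T₁ T₂) = 2 ↔ (a ≤ b + 2 ∧ b ≤ a + 2) := by
  haveI := h₁.1.nonempty
  haveI := h₂.1.nonempty
  have ha : 0 < a := Fin.pos_iff_nonempty.2 inferInstance
  have hb : 0 < b := Fin.pos_iff_nonempty.2 inferInstance
  constructor
  · intro hq
    have hne : {q | ∃ A : Matrix (Fin a ⊕ Fin b) (Fin a ⊕ Fin b) ℝ,
        inS (graphJoin T₁ T₂) A ∧ qMat A = q}.Nonempty := by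
      by_contra hemp
      rw [Set.not_nonempty_iff_eq_empty] at hemp
      rw [qGraph, hemp, Nat.sInf_empty] at hq
      omega
    have hmem := Nat.sInf_mem hne
    rw [qGraph] at hq
    rw [hq] at hmem
    obtain ⟨A, hA, hA2⟩ := hmem
    obtain ⟨α, β, hne', hset⟩ := Finset.card_eq_two.1 hA2
    have hroots : ∀ r ∈ A.charpoly.roots, r = α ∨ r = β := by
      intro r hr
      have : r ∈ (specMultiset A).toFinset := Multiset.mem_toFinset.2 hr
      rw [hset] at this
      simpa using this
    rcases lt_or_gt_of_ne hne' with hlt | hlt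
    · have := necessity T₁ T₂ h₁ h₂ A hA β α hlt (symm_quad A hA.1 β α fun r hr => (hroots r hr).symm)
      simpa using this
    · have := necessity T₁ T₂ h₁ h₂ A hA α β hlt (symm_quad A hA.1 α β hroots)
      simpa using this
  · rintro ⟨hab, hba⟩
    have hR : Rz T₁ T₂ := by
      rcases le_total b a with hle | hle
      · exact rz_main (b - 1) _ _ T₁ T₂ h₁ h₂ (by simp; omega) (by simpa) (by simpa)
      · exact rz_swap (rz_main (a - 1) _ _ T₂ T₁ h₂ h₁ (by simp; omega) (by simpa) (by simpa))
    obtain ⟨A, hs, hsq, h11, h22, h12, -⟩ := hR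
    have hA : inS (graphJoin T₁ T₂) A := by
      refine ⟨hs, ?_⟩
      rintro (i | i) (j | j) hij
      · rw [gj_adj_ll]; exact h11 i j (by simpa using hij)
      · exact ⟨fun _ => gj_adj_lr _ _ _ _, fun _ => h12 _ _⟩
      · refine ⟨fun _ => (gj_adj_lr _ _ _ _).symm, fun _ => ?_⟩
        rw [hs.apply]; exact h12 _ _
      · rw [gj_adj_rr]; exact h22 i j (by simpa using hij)
    have hA2 : qMat A = 2 := le_antisymm (qMat_le_two A hsq) (two_le_qMat T₁ T₂ A hA)
    refine le_antisymm (Nat.sInf_le ⟨A, hA, hA2⟩) ?_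
    refine le_csInf ⟨2, A, hA, hA2⟩ ?_
    rintro q ⟨M, hM, rfl⟩
    exact two_le_qMat T₁ T₂ M hM
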